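/- The Graev free abelian topological group A_G(s) over the convergent sequence s is not a quasi-Mackey group: there exists a locally quasi-convex group topology ν on the underlying group ℤ^(ℕ) of A_G(s) that is compatible with the topology τ of A_G(s) and satisfies τ < ν (ν is strictly finer than τ). -/

import Mathlib

open Filter Topology

noncomputable section

/-- `𝕊₊ = {z ∈ 𝕊 : Re z ≥ 0}`. -/
def SPlus : Set Circle := {z : Circle | 0 ≤ (z : ℂ).re}

/-- A character of an abelian group `G` is a homomorphism `G → 𝕊`. -/
def IsChar {G : Type*} [AddCommGroup G] (χ : G → Circle) : Prop :=
  ∀ x y : G, χ (x + y) = χ x * χ y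

/-- Two topologies on an abelian group `G` are *compatible* if they have the same
continuous characters `G → 𝕊`. -/
def Compatible {G : Type*} [AddCommGroup G] (t₁ t₂ : TopologicalSpace G) : Prop :=
  ∀ χ : G → Circle, IsChar χ →
    (@Continuous G Circle t₁ _ χ ↔ @Continuous G Circle t₂ _ χ)

/-- A subset `A` of a topological abelian group is *quasi-convex* if for every `g ∉ A`
there is a continuous character `χ` with `χ(A) ⊆ 𝕊₊` and `χ(g) ∉ 𝕊₊`. -/
def IsQuasiConvex {G : Type*} [AddCommGroup G] (t : TopologicalSpace G) (A : Set G) : Prop :=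
  ∀ g : G, g ∉ A → ∃ χ : G → Circle, IsChar χ ∧ @Continuous G Circle t _ χ ∧
    (∀ a ∈ A, χ a ∈ SPlus) ∧ χ g ∉ SPlus

/-- A topological abelian group is *locally quasi-convex* if it has a neighborhood base
at `0` consisting of quasi-convex sets. -/
def LocallyQuasiConvex {G : Type*} [AddCommGroup G] (t : TopologicalSpace G) : Prop :=
  ∀ U ∈ @nhds G t 0, ∃ V ∈ @nhds G t 0, V ⊆ U ∧ IsQuasiConvex t V

/-- The convergent sequence `s = {0} ∪ {1/n : n ∈ ℕ}` as a subspace of `ℝ`. -/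
def sSet : Set ℝ := {x : ℝ | x = 0 ∨ ∃ n : ℕ, 0 < n ∧ x = 1 / n}

/-- The natural map `s → ℤ^(ℕ)`, sending `0 ↦ 0` and `1/n ↦ e_n = single n 1`. -/
def sMap (x : sSet) : ℕ →₀ ℤ :=
  if (x : ℝ) = 0 then 0 else Finsupp.single ⌈(1 : ℝ) / (x : ℝ)⌉₊ 1

/-- The topology of the Graev free abelian topological group `A_G(s)`, i.e. the finest
group topology on `ℤ^(ℕ)` making `sMap : s → ℤ^(ℕ)` continuous.  In Mathlib's lattice of
(group) topologies `t ≤ s` means `t` is *finer* than `s`, so the finest such group topology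
is the `sInf` of the collection of all group topologies making `sMap` continuous; this
`sInf` itself makes `sMap` continuous, since `Continuous` into `t` means
`coinduced sMap _ ≤ t.toTopologicalSpace`, a condition preserved by `sInf`. -/
def tauGT : AddGroupTopology (ℕ →₀ ℤ) :=
  sInf {t : AddGroupTopology (ℕ →₀ ℤ) | @Continuous _ _ _ t.toTopologicalSpace sMap}

/-- The topology `τ` of `A_G(s)` on `ℤ^(ℕ)`. -/
def tau : TopologicalSpace (ℕ →₀ ℤ) := tauGT.toTopologicalSpace

abbrev GG := ℕ →₀ ℤ

def ee (n : ℕ) : GG := Finsupp.single n 1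

lemma sMap_cont_of (t : TopologicalSpace GG) (h : Tendsto ee atTop (@nhds GG t 0)) :
    @Continuous _ _ _ t sMap := by
  rw [continuous_iff_continuousAt]
  rintro ⟨x, hx⟩
  rcases eq_or_ne x 0 with h0 | h0
  · subst h0
    have e0 : sMap ⟨0, hx⟩ = 0 := by simp [sMap]
    unfold ContinuousAt
    rw [e0]
    intro U hU
    have h0U : (0 : GG) ∈ U := mem_of_mem_nhds hU
    obtain ⟨N, hN⟩ := eventually_atTop.1 (h hU)
    have : ∀ᶠ y : sSet in 𝓝 ⟨0, hx⟩, (y : ℝ) < 1 / ((N : ℝ) + 1) := by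
      apply (continuous_subtype_val.tendsto _).eventually (gt_mem_nhds _)
      simp only
      positivity
    rw [mem_map]
    filter_upwards [this] with y hy
    obtain ⟨y, hy'⟩ := y
    simp only at hy
    rcases hy' with rfl | ⟨n, hn, rfl⟩
    · simpa [sMap] using h0U
    · have hn' : (0 : ℝ) < n := by exact_mod_cast hn
      have hlt : (N : ℝ) + 1 < n := (one_div_lt_one_div hn' (by positivity)).1 hy
      have : N ≤ n := by
        have : N + 1 < n := by exact_mod_cast hlt
        omega
      have := hN n this
      simpa [sMap, hn.ne', ee] using this
  · have hc : ContinuousAt (fun y : sSet => 1 / (y : ℝ)) ⟨x, hx⟩ :=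
      ContinuousAt.div continuousAt_const continuous_subtype_val.continuousAt h0
    have h1 := hc (Metric.ball_mem_nhds _ one_pos)
    have h2 : ∀ᶠ y : sSet in 𝓝 ⟨x, hx⟩, (y : ℝ) ≠ 0 :=
      continuous_subtype_val.continuousAt.eventually_ne h0
    apply ContinuousAt.congr (f := fun _ => sMap ⟨x, hx⟩) continuousAt_const
    rw [mem_map] at h1
    filter_upwards [h1, h2] with y hy hy0
    obtain ⟨y, hy'⟩ := y
    simp only at hy0
    rcases hy' with rfl | ⟨n, hn, rfl⟩
    · exact absurd rfl hy0
    rcases hx with rfl | ⟨m, hm, rfl⟩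
    · exact absurd rfl h0
    simp only [Set.mem_preimage, Metric.mem_ball, Real.dist_eq, one_div_one_div] at hy
    have : |(n : ℤ) - m| < 1 := by exact_mod_cast hy
    have : n = m := by
      have := Int.abs_lt_one_iff.1 this
      omega
    subst this
    rfl

lemma ee_tendsto_of (t : TopologicalSpace GG) (h : @Continuous _ _ _ t sMap) :
    Tendsto ee atTop (@nhds GG t 0) := by
  have hm : ∀ n : ℕ, (1 / ((n : ℝ) + 1)) ∈ sSet := fun n =>
    Or.inr ⟨n + 1, Nat.succ_pos _, by push_cast; rfl⟩
  have h0 : (0 : ℝ) ∈ sSet := Or.inl rfl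
  have hl : Tendsto (fun n : ℕ => (⟨_, hm n⟩ : sSet)) atTop (𝓝 ⟨0, h0⟩) := by
    rw [tendsto_subtype_rng]
    exact tendsto_one_div_add_atTop_nhds_zero_nat
  have h2 := (h.tendsto ⟨0, h0⟩).comp hl
  have e0 : sMap ⟨0, h0⟩ = 0 := by simp [sMap]
  rw [e0] at h2
  rw [← tendsto_add_atTop_iff_nat 1]
  refine h2.congr fun n => ?_
  have : (n : ℝ) + 1 ≠ 0 := by positivity
  have h3 : ⌈(n : ℝ) + 1⌉₊ = n + 1 := by exact_mod_cast Nat.ceil_natCast (R := ℝ) (n + 1)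
  simp [sMap, ee, this, h3]

lemma ee_tau : Tendsto ee atTop (@nhds GG tau 0) := by
  apply ee_tendsto_of
  unfold tau tauGT
  rw [AddGroupTopology.toTopologicalSpace_sInf]
  rw [continuous_sInf_rng]
  rintro _ ⟨t, ht, rfl⟩
  exact ht

lemma tau_le (t : AddGroupTopology GG) (h : Tendsto ee atTop (@nhds GG t.toTopologicalSpace 0)) :
    tau ≤ t.toTopologicalSpace := by
  have : tauGT ≤ t := sInf_le (sMap_cont_of _ h)
  exact this

lemma IsChar.zero {G : Type*} [AddCommGroup G] {χ : G → Circle} (h : IsChar χ) : χ 0 = 1 := by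
  have := h 0 0
  simpa using this

def IsChar.hom {G : Type*} [AddCommGroup G] {χ : G → Circle} (h : IsChar χ) :
    G →+ Additive Circle where
  toFun x := Additive.ofMul (χ x)
  map_zero' := by rw [h.zero]; rfl
  map_add' x y := by rw [h x y]; rfl

lemma char_cont {χ : GG → Circle} (h : IsChar χ) (h1 : Tendsto (fun n => χ (ee n)) atTop (𝓝 1)) :
    @Continuous _ _ tau _ χ := by
  let t : AddGroupTopology GG :=
    ⟨TopologicalSpace.induced h.hom inferInstance, topologicalAddGroup_induced h.hom⟩
  have ht : tau ≤ t.toTopologicalSpace := by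
    apply tau_le
    change Tendsto ee atTop (@nhds GG (TopologicalSpace.induced h.hom inferInstance) 0)
    rw [nhds_induced, tendsto_comap_iff, map_zero]
    exact h1
  rw [continuous_iff_le_induced]
  exact ht

/-- group topology from a sequence of sets -/
def seqGT (S : ℕ → Set GG) (h0 : ∀ i, 0 ∈ S i) (hanti : ∀ i j, i ≤ j → S j ⊆ S i)
    (hadd : ∀ i, ∀ x ∈ S (i+1), ∀ y ∈ S (i+1), x + y ∈ S i)
    (hneg : ∀ i, ∀ x ∈ S i, -x ∈ S i) : AddGroupTopology GG :=
  letI B : AddGroupFilterBasis GG := addGroupFilterBasisOfComm (Set.range S) (Set.range_nonempty S)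
    (by
      rintro _ _ ⟨i, rfl⟩ ⟨j, rfl⟩
      exact ⟨_, ⟨max i j, rfl⟩, Set.subset_inter (hanti _ _ (le_max_left _ _))
        (hanti _ _ (le_max_right _ _))⟩)
    (by rintro _ ⟨i, rfl⟩; exact h0 i)
    (by
      rintro _ ⟨i, rfl⟩
      refine ⟨_, ⟨i + 1, rfl⟩, ?_⟩
      rintro _ ⟨x, hx, y, hy, rfl⟩
      exact hadd i x hx y hy)
    (by rintro _ ⟨i, rfl⟩; exact ⟨_, ⟨i, rfl⟩, hneg i⟩)
  ⟨B.topology, B.isTopologicalAddGroup⟩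

lemma mem_seqGT (S : ℕ → Set GG) (h0 : ∀ i, 0 ∈ S i) (hanti : ∀ i j, i ≤ j → S j ⊆ S i)
    (hadd : ∀ i, ∀ x ∈ S (i+1), ∀ y ∈ S (i+1), x + y ∈ S i)
    (hneg : ∀ i, ∀ x ∈ S i, -x ∈ S i) (U : Set GG) :
    U ∈ @nhds GG (seqGT S h0 hanti hadd hneg).toTopologicalSpace 0 ↔ ∃ i, S i ⊆ U := by
  unfold seqGT
  refine (AddGroupFilterBasis.nhds_zero_hasBasis _).mem_iff.trans ?_
  constructor
  · rintro ⟨_, ⟨i, rfl⟩, h⟩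
    exact ⟨i, h⟩
  · rintro ⟨i, h⟩
    exact ⟨_, ⟨i, rfl⟩, h⟩

/-- weighted l1 norm -/
def pg (g : ℕ → ℝ) (x : GG) : ℝ := ∑ n ∈ x.support, g n * |(x n : ℝ)|

lemma pg_eq (g : ℕ → ℝ) (x : GG) (s : Finset ℕ) (h : x.support ⊆ s) :
    pg g x = ∑ n ∈ s, g n * |(x n : ℝ)| := by
  refine Finset.sum_subset h fun n _ hn => ?_
  simp [Finsupp.notMem_support_iff.1 hn]

lemma pg_add (g : ℕ → ℝ) (hg : ∀ n, 0 ≤ g n) (x y : GG) : pg g (x + y) ≤ pg g x + pg g y := by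
  classical
  rw [pg_eq g (x+y) (x.support ∪ y.support) Finsupp.support_add,
    pg_eq g x (x.support ∪ y.support) Finset.subset_union_left,
    pg_eq g y (x.support ∪ y.support) Finset.subset_union_right, ← Finset.sum_add_distrib]
  refine Finset.sum_le_sum fun n _ => ?_
  rw [← mul_add]
  refine mul_le_mul_of_nonneg_left ?_ (hg n)
  simp only [Finsupp.add_apply, Int.cast_add]
  exact abs_add_le _ _

lemma pg_neg (g : ℕ → ℝ) (x : GG) : pg g (-x) = pg g x := by
  simp [pg]

lemma pg_ee (g : ℕ → ℝ) (n : ℕ) : pg g (ee n) = g n := by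
  rw [pg_eq g (ee n) {n} Finsupp.support_single_subset]
  simp [ee]

def Bg (g : ℕ → ℝ) : Set GG := {x | pg g x ≤ 1}

lemma Bg_nhds (g : ℕ → ℝ) (hg : ∀ n, 0 ≤ g n) (hl : Tendsto g atTop (𝓝 0)) :
    Bg g ∈ @nhds GG tau 0 := by
  let S : ℕ → Set GG := fun i => {x | 2 ^ i * pg g x ≤ 1}
  have hp : ∀ x, 0 ≤ pg g x := fun x =>
    Finset.sum_nonneg fun n _ => mul_nonneg (hg n) (abs_nonneg _)
  have h0 : ∀ i, 0 ∈ S i := fun i => by simp [S, pg]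
  have hanti : ∀ i j, i ≤ j → S j ⊆ S i := fun i j hij x hx =>
    le_trans (mul_le_mul_of_nonneg_right (pow_le_pow_right₀ (by norm_num) hij) (hp x)) hx
  have hadd : ∀ i, ∀ x ∈ S (i+1), ∀ y ∈ S (i+1), x + y ∈ S i := by
    intro i x hx y hy
    simp only [S, Set.mem_ofPred_eq, pow_succ] at *
    have := mul_le_mul_of_nonneg_left (pg_add g hg x y) (by positivity : (0:ℝ) ≤ 2 ^ i)
    linarith
  have hneg : ∀ i, ∀ x ∈ S i, -x ∈ S i := by
    intro i x hx
    simpa only [S, Set.mem_ofPred_eq, pg_neg] using hx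
  have hle := tau_le (seqGT S h0 hanti hadd hneg) (by
    intro U hU
    obtain ⟨i, hi⟩ := (mem_seqGT S h0 hanti hadd hneg U).1 hU
    have : ∀ᶠ n in atTop, 2 ^ i * g n < 1 := by
      have : Tendsto (fun n => 2 ^ i * g n) atTop (𝓝 (2 ^ i * 0)) := hl.const_mul _
      rw [mul_zero] at this
      exact this.eventually (gt_mem_nhds one_pos)
    rw [mem_map]
    filter_upwards [this] with n hn
    apply hi
    simp only [S, Set.mem_ofPred_eq, pg_ee]
    exact hn.le)
  have h1 := (nhds_mono hle : @nhds GG tau 0 ≤ _)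
  apply h1
  rw [mem_seqGT]
  exact ⟨0, by simp [S, Bg]⟩

lemma block (G : Type) [AddCommGroup G] [TopologicalSpace G] [IsTopologicalAddGroup G] (v : ℕ → G)
    (m : ℕ) : ∀ U ∈ 𝓝 (0 : G), ∃ V ∈ 𝓝 (0 : G), ∀ (s : Finset ℕ) (c : ℕ → ℤ),
    (∀ n ∈ s, v n ∈ V) → ∑ n ∈ s, |c n| ≤ m → ∑ n ∈ s, c n • v n ∈ U := by
  induction m with
  | zero =>
    intro U hU
    refine ⟨Set.univ, univ_mem, fun s c _ hc => ?_⟩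
    have h1 : ∑ n ∈ s, |c n| = 0 := le_antisymm hc (Finset.sum_nonneg fun _ _ => abs_nonneg _)
    rw [Finset.sum_eq_zero_iff_of_nonneg fun _ _ => abs_nonneg _] at h1
    rw [Finset.sum_eq_zero]
    · exact mem_of_mem_nhds hU
    · intro n hn
      rw [abs_eq_zero.1 (h1 n hn), zero_smul]
  | succ m ih =>
    intro U hU
    obtain ⟨W, hW, hWU⟩ := exists_nhds_zero_half hU
    obtain ⟨V, hV, hVW⟩ := ih W hW
    refine ⟨V ∩ (W ∩ -W), inter_mem hV (inter_mem hW (neg_mem_nhds_zero _ hW)), fun s c hs hc => ?_⟩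
    by_cases h0 : ∀ n ∈ s, c n = 0
    · rw [Finset.sum_eq_zero]
      · exact mem_of_mem_nhds hU
      · intro n hn
        rw [h0 n hn, zero_smul]
    · push Not at h0
      obtain ⟨k, hk, hck⟩ := h0
      have key : ∀ δ : ℤ, |c k - δ| = |c k| - 1 → δ • v k ∈ W → ∑ n ∈ s, c n • v n ∈ U := by
        intro δ hδ hv
        have h1 := hVW s (Function.update c k (c k - δ)) (fun n hn => (hs n hn).1) (by
          have : ∑ n ∈ s, |Function.update c k (c k - δ) n| = ∑ n ∈ s, |c n| - 1 := by
            rw [← Finset.add_sum_erase _ _ hk, ← Finset.add_sum_erase s (fun n => |c n|) hk]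
            rw [Finset.sum_congr rfl (g := fun n => |c n|)]
            · simp [hδ]; ring
            · intro n hn
              rw [Function.update_of_ne (Finset.ne_of_mem_erase hn)]
          rw [this]
          push_cast at hc
          linarith)
        have h2 : ∑ n ∈ s, c n • v n
            = ∑ n ∈ s, Function.update c k (c k - δ) n • v n + δ • v k := by
          rw [← Finset.add_sum_erase s (fun n => c n • v n) hk,
            ← Finset.add_sum_erase s (fun n => Function.update c k (c k - δ) n • v n) hk]
          rw [Finset.sum_congr (s₁ := s.erase k) rfl
            (g := fun n => Function.update c k (c k - δ) n • v n)]
          · simp [sub_smul]; abel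
          · intro n hn
            rw [Function.update_of_ne (Finset.ne_of_mem_erase hn)]
        rw [h2]
        exact hWU _ h1 _ hv
      rcases lt_or_gt_of_ne hck with h | h
      · refine key (-1) ?_ ?_
        · rw [abs_of_neg h, abs_of_nonpos (by omega)]; ring
        · simpa using (hs k hk).2.2
      · refine key 1 ?_ ?_
        · rw [abs_of_pos h, abs_of_nonneg (by omega)]
        · simpa using (hs k hk).2.1

lemma exists_level (P : ℕ → ℕ → Prop) (h : ∀ j, ∀ᶠ n in atTop, P j n) :
    ∃ l : ℕ → ℕ, Tendsto l atTop atTop ∧ ∀ n, l n ≠ 0 → P (l n) n := by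
  choose N hN using fun j => eventually_atTop.1 (h j)
  refine ⟨fun n => Nat.findGreatest (fun j => N j ≤ n) n, ?_, ?_⟩
  · rw [tendsto_atTop]
    intro J
    filter_upwards [eventually_ge_atTop J, eventually_ge_atTop (N J)] with n h1 h2
    exact Nat.le_findGreatest h1 h2
  · intro n hn
    exact hN _ _ (Nat.findGreatest_of_ne_zero (P := fun j => N j ≤ n) (n := n) rfl hn)

lemma exists_Bg (U : Set GG) (hU : U ∈ @nhds GG tau 0) :
    ∃ g : ℕ → ℝ, (∀ n, 0 ≤ g n) ∧ Tendsto g atTop (𝓝 0) ∧ Bg g ⊆ U := by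
  let : TopologicalSpace GG := tau
  have : IsTopologicalAddGroup GG := tauGT.toIsTopologicalAddGroup
  have hex : ∀ W : {W : Set GG // W ∈ 𝓝 (0 : GG)}, ∃ V : {W : Set GG // W ∈ 𝓝 (0 : GG)},
      ∀ v ∈ V.1, ∀ w ∈ V.1, v + w ∈ W.1 := by
    intro W
    obtain ⟨V, hV, h⟩ := exists_nhds_zero_half W.2
    exact ⟨⟨V, hV⟩, h⟩
  choose F hF using hex
  let u : ℕ → {W : Set GG // W ∈ 𝓝 (0 : GG)} := fun j => F^[j] ⟨U, hU⟩
  have hu : ∀ j, ∀ v ∈ (u (j+1)).1, ∀ w ∈ (u (j+1)).1, v + w ∈ (u j).1 := by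
    intro j
    have : u (j+1) = F (u j) := Function.iterate_succ_apply' F j _
    rw [this]
    exact hF _
  have hu0 : ∀ j, (0 : GG) ∈ (u j).1 := fun j => mem_of_mem_nhds (u j).2
  have hsum : ∀ k j : ℕ, ∀ y : ℕ → GG, (∀ i, y i ∈ (u (i + 1)).1) →
      ∑ i ∈ Finset.range k, y (j + i) ∈ (u j).1 := by
    intro k
    induction k with
    | zero => intro j y _; simpa using hu0 j
    | succ k ih =>
      intro j y hy
      rw [Finset.sum_range_succ', add_comm]
      refine hu j _ (hy j) _ ?_
      have := ih (j+1) y hy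
      refine Eq.subst (motive := fun z => z ∈ (u (j+1)).1) ?_ this
      exact Finset.sum_congr rfl fun i _ => by congr 1; omega
  choose V hV hVs using fun j => block GG ee j (u (j+1)).1 (u (j+1)).2
  obtain ⟨l, hl, hlP⟩ := exists_level (fun j n => ee n ∈ V j) (fun j => ee_tau (hV j))
  refine ⟨fun n => if l n = 0 then 2 else 1 / (l n : ℝ), ?_, ?_, ?_⟩
  · intro n
    dsimp only
    split_ifs <;> positivity
  · have h1 : Tendsto (fun n => 1 / (l n : ℝ)) atTop (𝓝 0) :=
      tendsto_one_div_atTop_nhds_zero_nat.comp hl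
    refine h1.congr' ?_
    filter_upwards [hl.eventually_gt_atTop 0] with n hn
    rw [if_neg hn.ne']
  · intro x hx
    set g : ℕ → ℝ := fun n => if l n = 0 then 2 else 1 / (l n : ℝ) with hgdef
    have hg0 : ∀ n, 0 ≤ g n := by
      intro n
      simp only [hgdef]
      split_ifs <;> positivity
    have hx' : ∑ n ∈ x.support, g n * |(x n : ℝ)| ≤ 1 := hx
    let y : ℕ → GG := fun j => ∑ n ∈ x.support with l n = j, x n • ee n
    have hnz : ∀ n ∈ x.support, l n ≠ 0 := by
      intro n hn h
      have h2 := Finset.single_le_sum (f := fun n => g n * |(x n : ℝ)|)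
        (fun n _ => mul_nonneg (hg0 n) (abs_nonneg _)) hn
      have h3 : (1 : ℝ) ≤ |(x n : ℝ)| := by
        exact_mod_cast Int.one_le_abs (Finsupp.mem_support_iff.1 hn)
      simp only [hgdef, h, if_true] at h2
      linarith
    have hy : ∀ j, y j ∈ (u (j+1)).1 := by
      intro j
      apply hVs j
      · intro n hn
        rw [Finset.mem_filter] at hn
        have := hlP n (hnz n hn.1)
        rwa [hn.2] at this
      · rcases Nat.eq_zero_or_pos j with rfl | hj
        · rw [Finset.filter_false_of_mem hnz]
          simp
        · have h2 : ∑ n ∈ x.support with l n = j, g n * |(x n : ℝ)| ≤ 1 :=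
            le_trans (Finset.sum_le_sum_of_subset_of_nonneg (Finset.filter_subset _ _)
              (fun n _ _ => mul_nonneg (hg0 n) (abs_nonneg _))) hx'
          have hj' : (0 : ℝ) < j := by exact_mod_cast hj
          rw [Finset.sum_congr rfl (g := fun n => 1 / (j : ℝ) * |(x n : ℝ)|), ← Finset.mul_sum,
            div_mul_eq_mul_div, one_mul, div_le_one hj'] at h2
          · exact_mod_cast h2
          · intro n hn
            rw [Finset.mem_filter] at hn
            simp only [hgdef, hn.2, hj.ne', if_false]
    obtain ⟨J, hJ⟩ : ∃ J, ∀ n ∈ x.support, l n < J :=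
      ⟨x.support.sup l + 1, fun n hn => Nat.lt_succ_of_le (Finset.le_sup hn)⟩
    have hxe : x = ∑ i ∈ Finset.range J, y (0 + i) := by
      simp only [y, zero_add]
      rw [Finset.sum_fiberwise_of_maps_to (fun n hn => Finset.mem_range.2 (hJ n hn))]
      conv_lhs => rw [← Finsupp.sum_single x]
      simp [Finsupp.sum, ee]
    rw [hxe]
    exact hsum J 0 y hy

lemma mem_SPlus (z : Circle) : z ∈ SPlus ↔ 0 ≤ (z : ℂ).re := Iff.rfl

lemma circle_sq (z : Circle) : (z : ℂ).re ^ 2 + (z : ℂ).im ^ 2 = 1 := by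
  have := Circle.normSq_coe z
  rw [Complex.normSq_apply] at this
  linarith

lemma sq_re (z : Circle) : ((z ^ 2 : Circle) : ℂ).re = 2 * (z : ℂ).re ^ 2 - 1 := by
  have := circle_sq z
  rw [pow_two, Circle.coe_mul, Complex.mul_re]
  linarith

lemma eq_one_of_SPlus (z : Circle) (h : ∀ j : ℕ, z ^ (2 ^ j) ∈ SPlus) : z = 1 := by
  have hr1 : ∀ w : Circle, (w : ℂ).re ≤ 1 := fun w => by nlinarith [circle_sq w, sq_nonneg (w : ℂ).im]
  have key : ∀ j : ℕ, 2 ^ j * (1 - (z : ℂ).re) ≤ 1 - ((z ^ (2 ^ j) : Circle) : ℂ).re := by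
    intro j
    induction j with
    | zero => simp
    | succ j ih =>
      have h1 := (mem_SPlus _).1 (h j)
      have h2 := hr1 (z ^ (2 ^ j))
      have e : z ^ (2 ^ (j + 1)) = (z ^ (2 ^ j)) ^ 2 := by rw [← pow_mul, ← pow_succ]
      rw [e, sq_re, pow_succ]
      nlinarith
  have hre : (z : ℂ).re = 1 := by
    by_contra hne
    have hlt : 0 < 1 - (z : ℂ).re := sub_pos.2 (lt_of_le_of_ne (hr1 z) hne)
    obtain ⟨n, hn⟩ := pow_unbounded_of_one_lt (1 / (1 - (z : ℂ).re)) (one_lt_two)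
    rw [div_lt_iff₀ hlt] at hn
    have := key n
    have := (mem_SPlus _).1 (h n)
    linarith
  have him : (z : ℂ).im = 0 := by
    have := circle_sq z
    rw [hre] at this
    nlinarith
  apply Circle.ext
  apply Complex.ext
  · simpa using hre
  · simpa using him

lemma SPlus_mul (u v : Circle) (hu : u ∈ SPlus) (hu2 : u ^ 2 ∈ SPlus) (hv : v ∈ SPlus)
    (hv2 : v ^ 2 ∈ SPlus) : u * v ∈ SPlus := by
  rw [mem_SPlus] at *
  rw [sq_re] at hu2 hv2
  have h1 := circle_sq u
  have h2 := circle_sq v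
  rw [Circle.coe_mul, Complex.mul_re]
  have a1 : |(u : ℂ).im| ≤ (u : ℂ).re := abs_le_of_sq_le_sq (by linarith) hu
  have a2 : |(v : ℂ).im| ≤ (v : ℂ).re := abs_le_of_sq_le_sq (by linarith) hv
  have := mul_le_mul a1 a2 (abs_nonneg _) hu
  rw [← abs_mul] at this
  have := (abs_le.1 this).2
  linarith

lemma SPlus_inv (u : Circle) (hu : u ∈ SPlus) : u⁻¹ ∈ SPlus := by
  rw [mem_SPlus] at *
  rw [Circle.coe_inv_eq_conj, Complex.conj_re]
  exact hu

lemma SPlus_nhds : SPlus ∈ 𝓝 (1 : Circle) := by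
  have hc : Continuous (fun z : Circle => (z : ℂ).re) := by fun_prop
  have : ∀ᶠ z : Circle in 𝓝 1, 0 < (z : ℂ).re := by
    apply hc.continuousAt.eventually (lt_mem_nhds _)
    simp
  filter_upwards [this] with z hz
  exact hz.le

lemma SPlus_closed : IsClosed SPlus := by
  have hc : Continuous (fun z : Circle => (z : ℂ).re) := by fun_prop
  exact isClosed_le continuous_const hc

def zz : Circle := AddCircle.toCircle ((√2 : ℝ) : AddCircle (1 : ℝ))

lemma zz_ne : zz ≠ 1 := by
  intro h
  have h1 : ((√2 : ℝ) : AddCircle (1 : ℝ)) = 0 := by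
    apply AddCircle.injective_toCircle one_ne_zero
    simpa [zz] using h
  rw [AddCircle.coe_eq_zero_iff] at h1
  obtain ⟨n, hn⟩ := h1
  apply irrational_sqrt_two
  exact ⟨n, by simpa using hn⟩

lemma zz_dense (c : ℤ) (hc : c ≠ 0) (O : Set Circle) (hO : O ∈ 𝓝 (1 : Circle)) :
    ∃ b : ℤ, zz ^ (1 + b * c) ∈ O := by
  let w : AddCircle (1 : ℝ) := ((√2 : ℝ) : AddCircle (1 : ℝ))
  have hd : DenseRange (fun n : ℤ => n • (((c : ℝ) * √2 : ℝ) : AddCircle (1 : ℝ))) := by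
    rw [AddCircle.denseRange_zsmul_coe_iff, div_one]
    exact irrational_sqrt_two.intCast_mul hc
  have hcont : Continuous (fun x : AddCircle (1 : ℝ) => AddCircle.toCircle (w + x)) :=
    AddCircle.continuous_toCircle.comp (continuous_const_add w)
  have hmem : (fun x : AddCircle (1 : ℝ) => AddCircle.toCircle (w + x)) ⁻¹' O ∈ 𝓝 (-w) := by
    apply hcont.continuousAt
    simpa using hO
  obtain ⟨b, hb⟩ := hd.exists_mem_open isOpen_interior ⟨-w, mem_interior_iff_mem_nhds.2 hmem⟩
  refine ⟨b, ?_⟩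
  have hb' := interior_subset hb
  have e : (((c : ℝ) * √2 : ℝ) : AddCircle (1 : ℝ)) = c • w := by
    rw [← zsmul_eq_mul, AddCircle.coe_zsmul]
  simp only [Set.mem_preimage] at hb'
  rw [e, AddCircle.toCircle_add, AddCircle.toCircle_zsmul, AddCircle.toCircle_zsmul] at hb'
  have : zz ^ (1 + b * c) = AddCircle.toCircle w * (AddCircle.toCircle w ^ c) ^ b := by
    rw [zpow_add, zpow_one, mul_comm b c, zpow_mul]; rfl
  rw [this]
  exact hb'

def Es (i : ℕ) : Set GG := {x | ∀ k, ∀ j ≤ i, (zz ^ (x k)) ^ (2 ^ j) ∈ SPlus}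

lemma one_SPlus : (1 : Circle) ∈ SPlus := by simp [mem_SPlus]

def sigma : AddGroupTopology GG := seqGT Es
  (fun i k j _ => by simpa using one_SPlus)
  (fun i j hij x hx k l hl => hx k l (hl.trans hij))
  (fun i x hx y hy k j hj => by
    rw [Finsupp.add_apply, zpow_add, mul_pow]
    refine SPlus_mul _ _ (hx k j (by omega)) ?_ (hy k j (by omega)) ?_
    · rw [← pow_mul, ← pow_succ]; exact hx k (j+1) (by omega)
    · rw [← pow_mul, ← pow_succ]; exact hy k (j+1) (by omega))
  (fun i x hx k j hj => by
    rw [Finsupp.neg_apply, zpow_neg, inv_pow]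
    exact SPlus_inv _ (hx k j hj))

def nuGT : AddGroupTopology GG := tauGT ⊓ sigma

lemma nu_le : nuGT.toTopologicalSpace ≤ tau := by
  have : nuGT ≤ tauGT := inf_le_left
  exact this

lemma mem_nu (U : Set GG) : U ∈ @nhds GG nuGT.toTopologicalSpace 0 ↔
    ∃ W ∈ @nhds GG tau 0, ∃ i, W ∩ Es i ⊆ U := by
  have : @nhds GG nuGT.toTopologicalSpace 0 = @nhds GG tau 0 ⊓ @nhds GG sigma.toTopologicalSpace 0 := by
    unfold nuGT
    rw [AddGroupTopology.toTopologicalSpace_inf, nhds_inf]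
    rfl
  rw [this, mem_inf_iff_superset]
  unfold sigma
  constructor
  · rintro ⟨W, hW, V, hV, h⟩
    obtain ⟨i, hi⟩ := (mem_seqGT _ _ _ _ _ _).1 hV
    exact ⟨W, hW, i, (Set.inter_subset_inter_right _ hi).trans h⟩
  · rintro ⟨W, hW, i, h⟩
    exact ⟨W, hW, Es i, (mem_seqGT _ _ _ _ _ _).2 ⟨i, le_rfl⟩, h⟩

lemma tau_ne_nu : tau ≠ nuGT.toTopologicalSpace := by
  intro h
  have : ∃ j : ℕ, zz ^ (2 ^ j) ∉ SPlus := by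
    by_contra hc
    push Not at hc
    exact zz_ne (eq_one_of_SPlus _ hc)
  obtain ⟨j, hj⟩ := this
  have h1 : Es j ∈ @nhds GG tau 0 := by
    rw [h, mem_nu]
    exact ⟨Set.univ, univ_mem, j, Set.inter_subset_right⟩
  obtain ⟨n, hn⟩ := (ee_tau.eventually h1).exists
  have := hn n j le_rfl
  simp [ee] at this
  exact hj this

lemma Es_qc (i : ℕ) (g : GG) (hg : g ∉ Es i) : ∃ χ : GG → Circle, IsChar χ ∧
    @Continuous GG Circle tau _ χ ∧ (∀ a ∈ Es i, χ a ∈ SPlus) ∧ χ g ∉ SPlus := by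
  simp only [Es, Set.mem_ofPred_eq, not_forall] at hg
  obtain ⟨k, j, hj, h⟩ := hg
  have hchar : IsChar (fun x : GG => (zz ^ (x k)) ^ (2 ^ j)) := fun x y => by
    beta_reduce
    rw [Finsupp.add_apply, zpow_add, mul_pow]
  refine ⟨_, hchar, char_cont hchar ?_, fun a ha => ha k j hj, h⟩
  refine tendsto_const_nhds.congr' ?_
  filter_upwards [eventually_gt_atTop k] with n hn
  simp [ee, Finsupp.single_apply, hn.ne']

lemma Bg_qc (g : ℕ → ℝ) (hg : ∀ n, 0 ≤ g n) (hl : Tendsto g atTop (𝓝 0)) (x : GG)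
    (hx : x ∉ Bg g) : ∃ χ : GG → Circle, IsChar χ ∧
    @Continuous GG Circle tau _ χ ∧ (∀ a ∈ Bg g, χ a ∈ SPlus) ∧ χ x ∉ SPlus := by
  have hp : 1 < pg g x := not_le.1 hx
  obtain ⟨r, hr0, hr1, hra, hrb⟩ : ∃ r : ℝ, 0 ≤ r ∧ r ≤ 1 ∧ 1 < r * pg g x ∧ r * pg g x ≤ 2 := by
    rcases le_total (pg g x) 2 with h | h
    · exact ⟨1, by norm_num, le_rfl, by linarith, by linarith⟩
    · have h0 : (0 : ℝ) < pg g x := by linarith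
      refine ⟨2 / pg g x, by positivity, ?_, ?_, ?_⟩
      · rw [div_le_one h0]; exact h
      · rw [div_mul_cancel₀ _ h0.ne']; norm_num
      · rw [div_mul_cancel₀ _ h0.ne']
  let t : ℕ → ℝ := fun n => r * SignType.sign (x n : ℝ) * g n
  have ht : ∀ n, |t n| ≤ g n := by
    intro n
    simp only [t, abs_mul, abs_of_nonneg hr0, abs_of_nonneg (hg n)]
    have : |((SignType.sign (x n : ℝ) : SignType) : ℝ)| ≤ 1 := by
      cases SignType.sign (x n : ℝ) <;> simp
    have h2 : r * |((SignType.sign (x n : ℝ) : SignType) : ℝ)| ≤ 1 :=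
      mul_le_one₀ hr1 (abs_nonneg _) this
    nlinarith [hg n]
  let T : GG → ℝ := fun y => y.sum fun n a => t n * (a : ℝ)
  have hT : ∀ y z, T (y + z) = T y + T z := by
    intro y z
    refine Finsupp.sum_add_index' (by simp) (by intros; push_cast; ring)
  have hchar : IsChar (fun y => Circle.exp (Real.pi / 2 * T y)) := by
    intro y z
    beta_reduce
    rw [hT, mul_add, Circle.exp_add]
  have hre : ∀ s : ℝ, ((Circle.exp s : Circle) : ℂ).re = Real.cos s := by
    intro s
    rw [Circle.coe_exp, Complex.exp_ofReal_mul_I_re]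
  refine ⟨_, hchar, char_cont hchar ?_, ?_, ?_⟩
  · have h1 : ∀ n, T (ee n) = t n := by
      intro n
      simp [T, ee]
    simp only [h1]
    have h2 : Tendsto t atTop (𝓝 0) := squeeze_zero_norm ht hl
    have h3 : Tendsto (fun n => Circle.exp (Real.pi / 2 * t n)) atTop
        (𝓝 (Circle.exp (Real.pi / 2 * 0))) :=
      (Circle.exp.continuous.tendsto _).comp (h2.const_mul _)
    simpa using h3
  · intro y hy
    rw [mem_SPlus, hre]
    have h1 : |T y| ≤ 1 := by
      refine le_trans (Finset.abs_sum_le_sum_abs _ _) (le_trans (Finset.sum_le_sum ?_) hy)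
      intro n _
      rw [abs_mul]
      exact mul_le_mul_of_nonneg_right (ht n) (abs_nonneg _)
    rw [abs_le] at h1
    apply Real.cos_nonneg_of_mem_Icc
    constructor <;> nlinarith [Real.pi_pos]
  · rw [mem_SPlus, hre, not_le]
    have h1 : T x = r * pg g x := by
      simp only [T, pg, Finsupp.sum, Finset.mul_sum]
      refine Finset.sum_congr rfl fun n _ => ?_
      have := sign_mul_self (x n : ℝ)
      simp only [t]
      rw [← this]; ring
    rw [h1]
    apply Real.cos_neg_of_pi_div_two_lt_of_lt <;> nlinarith [Real.pi_pos]

lemma nu_lqc : LocallyQuasiConvex nuGT.toTopologicalSpace := by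
  intro U hU
  obtain ⟨W, hW, i, h⟩ := (mem_nu U).1 hU
  obtain ⟨g, hg, hl, hgW⟩ := exists_Bg W hW
  refine ⟨Bg g ∩ Es i, (mem_nu _).2 ⟨_, Bg_nhds g hg hl, i, le_rfl⟩,
    (Set.inter_subset_inter_left _ hgW).trans h, ?_⟩
  intro x hx
  by_cases h1 : x ∈ Bg g
  · obtain ⟨χ, h1, h2, h3, h4⟩ := Es_qc i x (fun h => hx ⟨h1, h⟩)
    exact ⟨χ, h1, continuous_le_dom nu_le h2, fun a ha => h3 a ha.2, h4⟩
  · obtain ⟨χ, h1, h2, h3, h4⟩ := Bg_qc g hg hl x h1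
    exact ⟨χ, h1, continuous_le_dom nu_le h2, fun a ha => h3 a ha.1, h4⟩

lemma char_zsmul {χ : GG → Circle} (h : IsChar χ) (a : ℤ) (x : GG) : χ (a • x) = χ x ^ a := by
  have := map_zsmul h.hom a x
  exact this

lemma char_sum {χ : GG → Circle} (h : IsChar χ) (m : ℕ) (f : ℕ → GG) :
    χ (∑ i ∈ Finset.range m, f i) = ∏ i ∈ Finset.range m, χ (f i) := by
  induction m with
  | zero => simpa using h.zero
  | succ m ih => rw [Finset.sum_range_succ, Finset.prod_range_succ, h, ih]

lemma key_lim {χ : GG → Circle} (h : IsChar χ) (W : Set GG) (hW : W ∈ @nhds GG tau 0) (i : ℕ)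
    (hWi : ∀ x ∈ W ∩ Es i, χ x ∈ SPlus) (a : ℤ) (ha : ∀ j ≤ i, (zz ^ a) ^ (2 ^ j) ∈ SPlus) :
    Tendsto (fun n => χ (ee n) ^ a) atTop (𝓝 1) := by
  let : TopologicalSpace GG := tau
  have : IsTopologicalAddGroup GG := tauGT.toIsTopologicalAddGroup
  apply tendsto_of_subseq_tendsto
  intro ns hns
  obtain ⟨p, hp, hnp⟩ := strictMono_subseq_of_tendsto_atTop hns
  obtain ⟨c, -, q, hq, hc⟩ := isCompact_univ.tendsto_subseq
    (x := fun n => χ (ee (ns (p n))) ^ a) (fun _ => Set.mem_univ _)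
  refine ⟨fun n => p (q n), ?_⟩
  suffices hc1 : c = 1 by rw [← hc1]; exact hc
  let f : ℕ → ℕ := fun n => ns (p (q n))
  have hf : StrictMono f := hnp.comp hq
  have hpow : ∀ m : ℕ, c ^ m ∈ SPlus := by
    intro m
    let y : ℕ → GG := fun n => a • ∑ l ∈ Finset.range m, ee (f (n + l))
    have hy0 : Tendsto y atTop (𝓝 0) := by
      have h1 : Tendsto (fun n => ∑ l ∈ Finset.range m, ee (f (n + l))) atTop
          (𝓝 (∑ l ∈ Finset.range m, (0 : GG))) := by
        apply tendsto_finsetSum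
        intro l _
        exact ee_tau.comp (hf.tendsto_atTop.comp (tendsto_add_atTop_nat l))
      have h2 := h1.const_smul a
      simpa using h2
    have hyE : ∀ n, y n ∈ Es i := by
      intro n k j hj
      have : y n k = 0 ∨ y n k = a := by
        simp only [y, Finsupp.smul_apply, Finsupp.finsetSum_apply, ee, Finsupp.single_apply]
        by_cases hk : ∃ l ∈ Finset.range m, f (n + l) = k
        · obtain ⟨l, hl, hlk⟩ := hk
          right
          rw [Finset.sum_eq_single_of_mem l hl]
          · simp [hlk]
          · intro b _ hb
            rw [if_neg]
            intro hbk
            have := hf.injective (hbk.trans hlk.symm)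
            omega
        · left
          rw [Finset.sum_eq_zero]
          · simp
          · intro l hl
            rw [if_neg]
            exact fun hh => hk ⟨l, hl, hh⟩
      rcases this with h0 | h0
      · rw [h0]; simpa using one_SPlus
      · rw [h0]; exact ha j hj
    have hχ : ∀ n, χ (y n) = ∏ l ∈ Finset.range m, χ (ee (f (n + l))) ^ a := by
      intro n
      simp only [y]
      rw [char_zsmul h, char_sum h, Finset.prod_zpow]
    have hlim : Tendsto (fun n => χ (y n)) atTop (𝓝 (c ^ m)) := by
      simp only [hχ]
      have : c ^ m = ∏ l ∈ Finset.range m, c := by simp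
      rw [this]
      apply tendsto_finsetProd
      intro l _
      exact hc.comp (tendsto_add_atTop_nat l)
    apply SPlus_closed.mem_of_tendsto hlim
    filter_upwards [hy0 hW] with n hn
    exact hWi _ ⟨hn, hyE n⟩
  exact eq_one_of_SPlus c fun j => hpow _

lemma nu_compat : Compatible nuGT.toTopologicalSpace tau := by
  intro χ h
  refine ⟨fun hc => ?_, fun hc => continuous_le_dom nu_le hc⟩
  have hmem : χ ⁻¹' SPlus ∈ @nhds GG nuGT.toTopologicalSpace 0 := by
    let : TopologicalSpace GG := nuGT.toTopologicalSpace
    apply hc.continuousAt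
    rw [h.zero]
    exact SPlus_nhds
  obtain ⟨W, hW, i, hWi⟩ := (mem_nu _).1 hmem
  let O : Set Circle := {w | ∀ j ≤ i, w ^ (2 ^ j) ∈ SPlus}
  have hO : O ∈ 𝓝 (1 : Circle) := by
    have : ∀ j ∈ Set.Iic i, ∀ᶠ w : Circle in 𝓝 1, w ^ (2 ^ j) ∈ SPlus := by
      intro j _
      have hcp : Continuous (fun w : Circle => w ^ (2 ^ j)) := continuous_pow _
      apply hcp.continuousAt
      simpa using SPlus_nhds
    exact (eventually_all_finite (Set.finite_Iic i)).2 this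
  obtain ⟨b, hb⟩ := zz_dense 2 two_ne_zero O hO
  obtain ⟨d, hd⟩ := zz_dense (1 + b * 2) (by omega) O hO
  have h1 := key_lim h W hW i hWi _ hb
  have h2 := key_lim h W hW i hWi _ hd
  apply char_cont h
  have h3 := h2.mul ((h1.zpow d).inv)
  have e : (1 : Circle) * (1 ^ d)⁻¹ = 1 := by simp
  rw [e] at h3
  refine h3.congr fun n => ?_
  rw [← zpow_mul, ← zpow_neg, ← zpow_add]
  have : 1 + d * (1 + b * 2) + -((1 + b * 2) * d) = 1 := by ring
  rw [this, zpow_one]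

/-- The group `A_G(s)` is not a quasi-Mackey group: there is a locally quasi-convex group
topology `ν` on `ℤ^(ℕ)` compatible with `τ` which is strictly finer than `τ`
(every `τ`-open set is `ν`-open, and `ν ≠ τ`). -/
theorem A_G_s_not_quasiMackey :
    ∃ ν : AddGroupTopology (ℕ →₀ ℤ),
      LocallyQuasiConvex ν.toTopologicalSpace ∧
      Compatible ν.toTopologicalSpace tau ∧
      (∀ U : Set (ℕ →₀ ℤ), IsOpen[tau] U → IsOpen[ν.toTopologicalSpace] U) ∧
      tau ≠ ν.toTopologicalSpace := by
  exact ⟨nuGT, nu_lqc, nu_compat, fun U hU => nu_le U hU, tau_ne_nu⟩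

end
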